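/- For every positive integer n and every integer k with 0 ≤ k < n/2, define p̄ = ( Σ_{i=0}^{k} C(n,i)·i ) / ( n · Σ_{i=0}^{k} C(n,i) ). Then 0 ≤ k/n − p̄ ≤ (1 − k/n)/( n·(1 − 2k/n) ) + 1/( 2n²·(1 − 2k/n)² ). -/

import Mathlib

/-!
Put `a i = C(n, i)`, `S = ∑ i ≤ k, a i` and `D = ∑ i ≤ k, a i * (k - i)`, so that
`k/n - p̄ = D / (n * S)` and the lower bound is immediate. For `i < k` the ratio of consecutive
binomial coefficients satisfies `(n - k + 1) * a i ≤ k * a (i + 1)`. Weighting this by `k - i` and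
summing, the right-hand side becomes, after shifting the index, at most `k * (D + S)`. Hence
`(n - 2 * k + 1) * D ≤ k * S`, that is `k/n - p̄ ≤ k / (n * (n - 2 * k + 1))`, which is already
below the first summand of the claimed bound because `k ≤ n - k`.
-/

open Finset

section CommRing

variable {R : Type*} [CommRing R]

theorem sum_range_succ_mul_sub (a : ℕ → R) (k : ℕ) :
    ∑ i ∈ range k, a (i + 1) * ((k : R) - i) =
      ∑ i ∈ range (k + 1), a i * ((k : R) - i) + ∑ i ∈ range (k + 1), a i - a 0 * (k + 1) := by
  rw [← sum_add_distrib, sum_range_succ', add_sub_assoc]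
  simp only [Nat.cast_add, Nat.cast_one, Nat.cast_zero]
  rw [show a 0 * ((k : R) - 0) + a 0 - a 0 * (k + 1) = 0 by ring, add_zero]
  exact sum_congr rfl fun i _ => by ring

variable [PartialOrder R] [IsOrderedRing R]

theorem sum_mul_sub_nonneg {a : ℕ → R} {k : ℕ} (ha : ∀ i ≤ k, 0 ≤ a i) :
    0 ≤ ∑ i ∈ range (k + 1), a i * ((k : R) - i) := by
  refine sum_nonneg fun i hi => ?_
  have hik : i ≤ k := mem_range_succ_iff.mp hi
  exact mul_nonneg (ha i hik) (sub_nonneg.mpr (Nat.mono_cast hik))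

theorem sub_mul_sum_mul_sub_le {a : ℕ → R} {c d : R} {k : ℕ} (hd : 0 ≤ d) (ha : 0 ≤ a 0)
    (hratio : ∀ i < k, c * a i ≤ d * a (i + 1)) :
    (c - d) * ∑ i ∈ range (k + 1), a i * ((k : R) - i) ≤ d * ∑ i ∈ range (k + 1), a i := by
  have drop_last : ∑ i ∈ range (k + 1), a i * ((k : R) - i) =
      ∑ i ∈ range k, a i * ((k : R) - i) := by
    rw [sum_range_succ, sub_self, mul_zero, add_zero]
  have shift_le : ∑ i ∈ range k, a (i + 1) * ((k : R) - i) ≤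
      ∑ i ∈ range (k + 1), a i * ((k : R) - i) + ∑ i ∈ range (k + 1), a i := by
    rw [sum_range_succ_mul_sub]
    exact sub_le_self _ (mul_nonneg ha (add_nonneg k.cast_nonneg zero_le_one))
  rw [sub_mul, sub_le_iff_le_add']
  calc c * ∑ i ∈ range (k + 1), a i * ((k : R) - i)
      = ∑ i ∈ range k, c * a i * ((k : R) - i) := by
        simp only [drop_last, mul_sum, mul_assoc]
    _ ≤ ∑ i ∈ range k, d * a (i + 1) * ((k : R) - i) := by
        refine sum_le_sum fun i hi => ?_
        have hik : i < k := mem_range.mp hi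
        exact mul_le_mul_of_nonneg_right (hratio i hik) (sub_nonneg.mpr (Nat.mono_cast hik.le))
    _ = d * ∑ i ∈ range k, a (i + 1) * ((k : R) - i) := by
        simp only [mul_sum, mul_assoc]
    _ ≤ d * (∑ i ∈ range (k + 1), a i * ((k : R) - i) + ∑ i ∈ range (k + 1), a i) :=
        mul_le_mul_of_nonneg_left shift_le hd
    _ = _ := mul_add _ _ _

theorem sub_add_one_mul_choose_le (n : ℕ) {i k : ℕ} (hik : i < k) :
    ((n : R) - k + 1) * n.choose i ≤ k * n.choose (i + 1) := by
  have absorb : (n + 1) * n.choose i ≤ k * (n.choose i + n.choose (i + 1)) := by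
    rw [Nat.add_one_mul_choose_eq, Nat.choose_succ_succ', mul_comm]
    exact Nat.mul_le_mul_right _ hik
  have absorb_cast : ((n : R) + 1) * n.choose i ≤ k * (n.choose i + n.choose (i + 1)) :=
    mod_cast Nat.mono_cast (α := R) absorb
  linear_combination absorb_cast

theorem mul_sum_choose_mul_sub_le (n k : ℕ) :
    ((n : R) - 2 * k + 1) * ∑ i ∈ range (k + 1), (n.choose i : R) * ((k : R) - i) ≤
      k * ∑ i ∈ range (k + 1), (n.choose i : R) := by
  have key := sub_mul_sum_mul_sub_le (a := fun i => (n.choose i : R)) (k := k) (Nat.cast_nonneg k)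
    (Nat.cast_nonneg _) fun i hi => sub_add_one_mul_choose_le n hi
  rwa [show (n : R) - k + 1 - k = n - 2 * k + 1 by ring] at key

theorem sum_range_choose_pos [Nontrivial R] (n k : ℕ) : 0 < ∑ i ∈ range (k + 1), (n.choose i : R) :=
  sum_pos' (fun _ _ => Nat.cast_nonneg _) ⟨0, by simp⟩

end CommRing

section Field

variable {K : Type*} [Field K]

theorem div_sub_sum_mul_div {a : ℕ → K} {k : ℕ} (x : K) (ha : ∑ i ∈ range (k + 1), a i ≠ 0) :
    (k : K) / x - (∑ i ∈ range (k + 1), a i * i) / (x * ∑ i ∈ range (k + 1), a i) =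
      (∑ i ∈ range (k + 1), a i * ((k : K) - i)) / (∑ i ∈ range (k + 1), a i) / x := by
  simp only [mul_sub, sum_sub_distrib, ← sum_mul]
  field_simp

variable [LinearOrder K] [IsStrictOrderedRing K]

theorem sum_choose_mul_sub_div_le {n k : ℕ} (hk : 2 * k ≤ n) :
    (∑ i ∈ range (k + 1), (n.choose i : K) * ((k : K) - i)) /
      (∑ i ∈ range (k + 1), (n.choose i : K)) ≤ k / ((n : K) - 2 * k + 1) := by
  have hk' : 2 * (k : K) ≤ n := mod_cast hk
  rw [div_le_div_iff₀ (sum_range_choose_pos n k) (by linarith), mul_comm]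
  exact mul_sum_choose_mul_sub_le n k

theorem div_sub_two_mul_add_one_le {x y : K} (hy : 0 ≤ y) (hyx : 2 * y < x) :
    y / (x - 2 * y + 1) ≤ (x - y) / (x - 2 * y) :=
  div_le_div₀ (by linarith) (by linarith) (by linarith) (by linarith)

end Field

/-- For every positive integer `n` and integer `0 ≤ k < n/2`,
the average fraction of ones
`p̄ = (∑_{i=0}^{k} C(n,i)·i)/(n·∑_{i=0}^{k} C(n,i))` satisfies
`0 ≤ k/n − p̄ ≤ (1 − k/n)/(n(1 − 2k/n)) + 1/(2n²(1 − 2k/n)²)`. -/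
theorem average_weight_fraction_bounds (n k : ℕ) (hn : 0 < n) (hk : 2 * k < n)
    (pbar : ℝ)
    (hpbar : pbar = (∑ i ∈ Finset.range (k + 1), (n.choose i : ℝ) * i)
        / ((n : ℝ) * ∑ i ∈ Finset.range (k + 1), (n.choose i : ℝ))) :
    0 ≤ (k : ℝ) / n - pbar
    ∧ (k : ℝ) / n - pbar
        ≤ (1 - (k : ℝ) / n) / ((n : ℝ) * (1 - 2 * (k : ℝ) / n))
          + 1 / (2 * (n : ℝ) ^ 2 * (1 - 2 * (k : ℝ) / n) ^ 2) := by
  have hk' : 2 * (k : ℝ) < n := mod_cast hk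
  have first_summand : (1 - (k : ℝ) / n) / ((n : ℝ) * (1 - 2 * (k : ℝ) / n)) =
      ((n : ℝ) - k) / (n - 2 * k) / n := by
    field_simp
  rw [hpbar, div_sub_sum_mul_div _ (sum_range_choose_pos n k).ne', first_summand]
  refine ⟨?_, le_add_of_le_of_nonneg ?_ (by positivity)⟩
  · have deficit_nonneg := sum_mul_sub_nonneg (a := fun i => (n.choose i : ℝ)) (k := k)
      fun _ _ => Nat.cast_nonneg _
    exact div_nonneg (div_nonneg deficit_nonneg (sum_range_choose_pos n k).le) n.cast_nonneg
  · gcongr ?_ / (n : ℝ)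
    exact (sum_choose_mul_sub_div_le hk.le).trans
      (div_sub_two_mul_add_one_le k.cast_nonneg hk')
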